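/- Let A ⊆ B be a strictly separable ring extension. Then the left global dimensions of A and B are equal. -/

import Mathlib

/-!
Statement 2: A strictly separable ring extension `A ⊆ B` has equal left global
dimensions: the left global dimension of `A` equals the left global dimension of `B`.

-/

universe u

open TensorProduct

/-- `pdLE R n M` means that the left `R`-module `M` has projective dimension `≤ n`:
for `n = 0` this says that `M` is projective, and for `n+1` that `M` admits an
epimorphism from a projective module whose kernel has projective dimension `≤ n`. -/
def pdLE (R : Type u) [Ring R] : ℕ → (M : Type u) → [AddCommGroup M] → [Module R M] → Prop
  | 0, M, _, _ => Module.Projective R M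
  | n + 1, M, _, _ => ∃ (P : Type u) (_ : AddCommGroup P) (_ : Module R P) (g : P →ₗ[R] M),
      Module.Projective R P ∧ Function.Surjective g ∧ pdLE R n ↥(LinearMap.ker g)

/-- The projective dimension (in `ℕ∞`, with `⊤` meaning infinite projective dimension)
of a left `R`-module `M`. -/
noncomputable def projDim (R : Type u) [Ring R] (M : Type u) [AddCommGroup M]
    [Module R M] : ℕ∞ :=
  sInf {d : ℕ∞ | ∃ n : ℕ, d = n ∧ pdLE R n M}

/-- The subgroup of `B ⊗_ℤ B` generated by the `A`-balancing relations; the quotient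
of `B ⊗_ℤ B` by this subgroup is the tensor product `B ⊗_A B` (for the right/left
`A`-module structures on `B` induced by `f : A →+* B`). -/
noncomputable def balancedRel {A B : Type*} [Ring A] [Ring B] (f : A →+* B) :
    AddSubgroup (TensorProduct ℤ B B) :=
  AddSubgroup.closure
    {x | ∃ (b : B) (a : A) (b' : B), x = (b * f a) ⊗ₜ[ℤ] b' - b ⊗ₜ[ℤ] (f a * b')}

/-- `B` is flat as a right `A`-module (via `f : A →+* B`), expressed by the standard
equational criterion for flatness (valid over arbitrary rings). -/
def RightFlat {A B : Type*} [Ring A] [Ring B] (f : A →+* B) : Prop :=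
  ∀ (n : ℕ) (x : Fin n → B) (a : Fin n → A), (∑ i, x i * f (a i)) = 0 →
    ∃ (k : ℕ) (y : Fin k → B) (c : Fin k → Fin n → A),
      (∀ i, x i = ∑ j, y j * f (c j i)) ∧ ∀ j, (∑ i, c j i * a i) = 0

/-- A ring extension `f : A →+* B` is *strictly separable* if
(1) the multiplication map `B ⊗_A B → B` is a split epimorphism of `B`-bimodules
    (equivalently, there is `w ∈ B ⊗_A B` with `μ(w) = 1` and `b·w = w·b` for all `b`;
    here elements of `B ⊗_A B` are represented by elements of `B ⊗_ℤ B` modulo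
    `balancedRel f`),
(2) the inclusion `A → B` is a split monomorphism of `A`-bimodules, and
(3) `B` is projective as a left `A`-module and flat as a right `A`-module. -/
def StrictlySeparable {A B : Type*} [Ring A] [Ring B] (f : A →+* B) : Prop :=
  (∃ w : TensorProduct ℤ B B, LinearMap.mul' ℤ B w = 1 ∧ ∀ b : B,
      TensorProduct.map (LinearMap.mulLeft ℤ b) (LinearMap.id : B →ₗ[ℤ] B) w -
        TensorProduct.map (LinearMap.id : B →ₗ[ℤ] B) (LinearMap.mulRight ℤ b) w
        ∈ balancedRel f) ∧
  (∃ π : B →+ A, (∀ a, π (f a) = a) ∧ (∀ (a : A) (b : B), π (f a * b) = a * π b) ∧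
      (∀ (a : A) (b : B), π (b * f a) = π b * a)) ∧
  (letI : Module A B := Module.compHom B f; Module.Projective A B) ∧
  RightFlat f

/-- The left global dimension of a ring `R`: the supremum of the projective dimensions
of all left `R`-modules. -/
noncomputable def leftGlobalDim (R : Type u) [Ring R] : ℕ∞ :=
  sSup {d : ℕ∞ | ∃ (M : Type u) (_ : AddCommGroup M) (_ : Module R M), d = projDim R M}

section Helpers

open CategoryTheory

theorem hpd_step {R : Type u} [Ring R] {K P M : Type u} [AddCommGroup K] [AddCommGroup P]
    [AddCommGroup M] [Module R K] [Module R P] [Module R M] (i : K →ₗ[R] P) (g : P →ₗ[R] M)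
    (hi : Function.Injective i) (he : Function.Exact i g) (hg : Function.Surjective g)
    (hP : Module.Projective R P) (n : ℕ) :
    HasProjectiveDimensionLT (ModuleCat.of R M) (n + 2) ↔
      HasProjectiveDimensionLT (ModuleCat.of R K) (n + 1) := by
  let S : ShortComplex (ModuleCat.{u} R) :=
    ShortComplex.moduleCatMk i g he.linearMap_comp_eq_zero
  have hS : S.ShortExact :=
    { exact := (ShortComplex.ShortExact.moduleCat_exact_iff_function_exact S).mpr he
      mono_f := (ModuleCat.mono_iff_injective _).2 hi
      epi_g := (ModuleCat.epi_iff_surjective _).2 hg }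
  exact hS.hasProjectiveDimensionLT_X₃_iff n ((IsProjective.iff_projective P).1 hP)

theorem hpd_ker {R : Type u} [Ring R] {P M : Type u} [AddCommGroup P]
    [AddCommGroup M] [Module R P] [Module R M] (g : P →ₗ[R] M)
    (hg : Function.Surjective g)
    (hP : Module.Projective R P) (n : ℕ) :
    HasProjectiveDimensionLT (ModuleCat.of R M) (n + 2) ↔
      HasProjectiveDimensionLT (ModuleCat.of R (LinearMap.ker g)) (n + 1) :=
  hpd_step (LinearMap.ker g).subtype g Subtype.val_injective
    (LinearMap.exact_subtype_ker_map g) hg hP n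

theorem hpd_zero {R : Type u} [Ring R] {M : Type u} [AddCommGroup M] [Module R M] :
    HasProjectiveDimensionLT (ModuleCat.of R M) (0 + 1) ↔ Module.Projective R M := by
  rw [IsProjective.iff_projective M]
  exact projective_iff_hasProjectiveDimensionLT_one.symm

theorem exists_free {R : Type u} [Ring R] (M : Type u) [AddCommGroup M] [Module R M] :
    Function.Surjective (Finsupp.linearCombination R (id : M → M)) :=
  Finsupp.linearCombination_id_surjective R M

theorem pdLE_iff {R : Type u} [Ring R] (n : ℕ) : ∀ (M : Type u) [AddCommGroup M] [Module R M],
    pdLE R n M ↔ HasProjectiveDimensionLT (ModuleCat.of R M) (n + 1) := by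
  induction n with
  | zero => intro M _ _; exact hpd_zero.symm
  | succ n ih =>
    intro M _ _
    constructor
    · rintro ⟨P, _, _, g, hP, hg, hk⟩
      exact (hpd_ker g hg hP n).2 ((ih _).1 hk)
    · intro h
      refine ⟨M →₀ R, inferInstance, inferInstance, Finsupp.linearCombination R id,
        inferInstance, exists_free M, (ih _).2 ?_⟩
      exact (hpd_ker _ (exists_free M) inferInstance n).1 h

theorem pdLE_retract {R : Type u} [Ring R] {n : ℕ} {M N : Type u} [AddCommGroup M] [Module R M]
    [AddCommGroup N] [Module R N] (i : N →ₗ[R] M) (r : M →ₗ[R] N) (h : ∀ x, r (i x) = x)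
    (hM : pdLE R n M) : pdLE R n N := by
  rw [pdLE_iff] at hM ⊢
  let e : Retract (ModuleCat.of R N) (ModuleCat.of R M) :=
    { i := ModuleCat.ofHom i
      r := ModuleCat.ofHom r
      retract := by ext x; exact h x }
  exact e.hasProjectiveDimensionLT (n + 1)

variable {A B : Type u} [Ring A] [Ring B] (f : A →+* B)

/-- restriction of a linear map along `f`. -/
def restr {X Y : Type u} [AddCommGroup X] [AddCommGroup Y] [Module A X] [Module B X]
    [Module A Y] [Module B Y] (hX : ∀ (a : A) (x : X), a • x = f a • x)
    (hY : ∀ (a : A) (x : Y), a • x = f a • x) (g : X →ₗ[B] Y) : X →ₗ[A] Y where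
  toFun := g
  map_add' := g.map_add
  map_smul' a x := by simp [hX, hY]

theorem proj_restr (hB : letI : Module A B := Module.compHom B f; Module.Projective A B)
    {P : Type u} [AddCommGroup P] [Module A P] [Module B P]
    (hP : ∀ (a : A) (x : P), a • x = f a • x) (h : Module.Projective B P) :
    Module.Projective A P := by
  let _ : Module A B := Module.compHom B f
  have hB' : Module.Projective A B := hB
  obtain ⟨s, hs⟩ := Module.projective_lifting_property
    (Finsupp.linearCombination B (id : P → P)) LinearMap.id (exists_free P)
  have hF : ∀ (a : A) (x : P →₀ B), a • x = f a • x := by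
    intro a x; ext p; rfl
  have hFp : Module.Projective A (P →₀ B) := by
    classical
    exact Module.Projective.of_equiv (finsuppLequivDFinsupp (ι := P) (M := B) A).symm
  refine Module.Projective.of_split (restr f hP hF s)
    (restr f hF hP (Finsupp.linearCombination B (id : P → P))) ?_
  ext x
  exact LinearMap.congr_fun hs x

theorem hpd_ker_restr
    (hB : letI : Module A B := Module.compHom B f; Module.Projective A B)
    {P N : Type u} [AddCommGroup P] [AddCommGroup N] [Module A P] [Module B P]
    [Module A N] [Module B N] (hP : ∀ (a : A) (x : P), a • x = f a • x)
    (hN : ∀ (a : A) (x : N), a • x = f a • x) (g : P →ₗ[B] N) [Module A (LinearMap.ker g)]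
    (hK : ∀ (a : A) (x : LinearMap.ker g), a • x = f a • x)
    (hg : Function.Surjective g) (hp : Module.Projective B P) (n : ℕ) :
    HasProjectiveDimensionLT (ModuleCat.of A N) (n + 2) ↔
      HasProjectiveDimensionLT (ModuleCat.of A (LinearMap.ker g)) (n + 1) :=
  hpd_step (restr f hK hP (LinearMap.ker g).subtype) (restr f hP hN g)
      Subtype.val_injective (LinearMap.exact_subtype_ker_map g) hg
      (proj_restr f hB hP hp) n

theorem hpd_restr (hB : letI : Module A B := Module.compHom B f; Module.Projective A B) (n : ℕ) :
    ∀ (N : Type u) [AddCommGroup N] [Module A N] [Module B N]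
    (_ : ∀ (a : A) (x : N), a • x = f a • x)
    (_ : pdLE B n N), pdLE A n N := by
  induction n with
  | zero => intro N _ _ _ hN h; exact proj_restr f hB hN h
  | succ n ih =>
    rintro N _ _ _ hN ⟨P, _, _, g, hP, hg, hk⟩
    letI : Module A P := Module.compHom P f
    have hP' : ∀ (a : A) (x : P), a • x = f a • x := fun _ _ => rfl
    letI : Module A (LinearMap.ker g) := Module.compHom _ f
    have hK' : ∀ (a : A) (x : LinearMap.ker g), a • x = f a • x := fun _ _ => rfl
    have := ih _ hK' hk
    rw [pdLE_iff] at this ⊢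
    exact (hpd_ker_restr f hB hP' hN g hK' hg hP n).2 this

theorem proj_of_sep (hw : ∃ w : TensorProduct ℤ B B, LinearMap.mul' ℤ B w = 1 ∧ ∀ b : B,
      TensorProduct.map (LinearMap.mulLeft ℤ b) (LinearMap.id : B →ₗ[ℤ] B) w -
        TensorProduct.map (LinearMap.id : B →ₗ[ℤ] B) (LinearMap.mulRight ℤ b) w
        ∈ balancedRel f)
    {N : Type u} [AddCommGroup N] [Module A N] [Module B N]
    (hN : ∀ (a : A) (x : N), a • x = f a • x) (h : Module.Projective A N) :
    Module.Projective B N := by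
  obtain ⟨w, hw1, hw2⟩ := hw
  let F := N →₀ B
  letI : Module A F := Module.compHom F f
  have hF : ∀ (a : A) (x : F), a • x = f a • x := fun _ _ => rfl
  let g : F →ₗ[B] N := Finsupp.linearCombination B (id : N → N)
  obtain ⟨s, hs⟩ := Module.projective_lifting_property (restr f hF hN g) LinearMap.id
    (exists_free N)
  have hs' : ∀ x, g (s x) = x := fun x => LinearMap.congr_fun hs x
  let Φ : N → (TensorProduct ℤ B B →ₗ[ℤ] F) := fun k =>
    TensorProduct.lift (LinearMap.mk₂ ℤ (fun x y => x • s (y • k))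
      (fun _ _ _ => add_smul _ _ _)
      (fun c x y => by rw [smul_assoc])
      (fun x y z => by rw [add_smul, map_add, smul_add])
      (fun c x y => by rw [smul_assoc, map_zsmul, smul_comm]))
  have hΦ : ∀ k x y, Φ k (x ⊗ₜ y) = x • s (y • k) := fun k x y => rfl
  have hbal : ∀ k, ∀ z ∈ balancedRel f, Φ k z = 0 := by
    intro k z hz
    induction hz using AddSubgroup.closure_induction with
    | mem z hz =>
      obtain ⟨b, a, b', rfl⟩ := hz
      rw [map_sub, hΦ, hΦ, mul_smul, mul_smul, ← hF, ← hN, s.map_smul, sub_self]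
    | zero => simp
    | add x y _ _ hx hy => simp [hx, hy]
    | neg x _ hx => simp [hx]
  have h1 : ∀ k b z, Φ k (TensorProduct.map (LinearMap.mulLeft ℤ b)
      (LinearMap.id : B →ₗ[ℤ] B) z) = b • Φ k z := by
    intro k b z
    induction z with
    | zero => simp
    | add x y hx hy => simp only [map_add, hx, hy, smul_add]
    | tmul x y => simp [hΦ, mul_smul]
  have h2 : ∀ k b z, Φ k (TensorProduct.map (LinearMap.id : B →ₗ[ℤ] B)
      (LinearMap.mulRight ℤ b) z) = Φ (b • k) z := by
    intro k b z
    induction z with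
    | zero => simp
    | add x y hx hy => simp only [map_add, hx, hy]
    | tmul x y => simp [hΦ, mul_smul]
  have h3 : ∀ k l z, Φ (k + l) z = Φ k z + Φ l z := by
    intro k l z
    induction z with
    | zero => simp
    | add x y hx hy => simp only [map_add, hx, hy]; abel
    | tmul x y => simp [hΦ]
  have h4 : ∀ k z, g (Φ k z) = LinearMap.mul' ℤ B z • k := by
    intro k z
    induction z with
    | zero => simp
    | add x y hx hy => simp only [map_add, hx, hy, add_smul]
    | tmul x y => rw [hΦ, map_smul, hs', LinearMap.mul'_apply, mul_smul]
  let t : N →ₗ[B] F :=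
    { toFun := fun k => Φ k w
      map_add' := fun k l => h3 k l w
      map_smul' := fun b k => by
        have := hbal k _ (hw2 b)
        rw [map_sub, h1, h2, sub_eq_zero] at this
        exact this.symm }
  refine Module.Projective.of_split t g ?_
  ext k
  change g (Φ k w) = k
  rw [h4, hw1, one_smul]

theorem pdLE_of_sep (hsep : StrictlySeparable f) (n : ℕ) :
    ∀ (N : Type u) [AddCommGroup N] [Module A N] [Module B N]
    (_ : ∀ (a : A) (x : N), a • x = f a • x)
    (_ : pdLE A n N), pdLE B n N := by
  induction n with
  | zero => intro N _ _ _ hN h; exact proj_of_sep f hsep.1 hN h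
  | succ n ih =>
    intro N _ _ _ hN h
    let g : (N →₀ B) →ₗ[B] N := Finsupp.linearCombination B (id : N → N)
    letI : Module A (N →₀ B) := Module.compHom _ f
    have hP' : ∀ (a : A) (x : N →₀ B), a • x = f a • x := fun _ _ => rfl
    letI : Module A (LinearMap.ker g) := Module.compHom _ f
    have hK' : ∀ (a : A) (x : LinearMap.ker g), a • x = f a • x := fun _ _ => rfl
    refine ⟨N →₀ B, inferInstance, inferInstance, g, inferInstance, exists_free N, ih _ hK' ?_⟩
    rw [pdLE_iff] at h ⊢
    exact (hpd_ker_restr f hsep.2.2.1 hP' hN g hK' (exists_free N) inferInstance n).1 h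

/-- `Hom_A(B, M)`. -/
def Coind (M : Type u) [AddCommGroup M] [Module A M] : AddSubgroup (B →+ M) where
  carrier := {φ | ∀ (a : A) (b : B), φ (f a * b) = a • φ b}
  add_mem' hx hy a b := by simp [hx a b, hy a b]
  zero_mem' a b := by simp
  neg_mem' hx a b := by simp [hx a b]

instance coindModule (M : Type u) [AddCommGroup M] [Module A M] : Module B (Coind f M) where
  smul b φ := ⟨φ.1.comp (AddMonoidHom.mulRight b), fun a b' => by
    simpa [mul_assoc] using φ.2 a (b' * b)⟩
  one_smul φ := Subtype.ext (AddMonoidHom.ext fun x => congrArg φ.1 (mul_one x))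
  mul_smul b c φ := Subtype.ext (AddMonoidHom.ext fun x => congrArg φ.1 (mul_assoc x b c).symm)
  smul_zero b := rfl
  smul_add b φ ψ := rfl
  add_smul b c φ := Subtype.ext (AddMonoidHom.ext fun x =>
    (congrArg φ.1 (mul_add x b c)).trans (map_add φ.1 _ _))
  zero_smul φ := Subtype.ext (AddMonoidHom.ext fun x =>
    (congrArg φ.1 (mul_zero x)).trans (map_zero φ.1))

theorem pdLE_of_coind (hsep : StrictlySeparable f) (n : ℕ)
    (M : Type u) [AddCommGroup M] [Module A M] (h : pdLE B n (Coind f M)) : pdLE A n M := by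
  obtain ⟨-, ⟨π, h1, h2, h3⟩, hB, -⟩ := hsep
  letI : Module A (Coind f M) := Module.compHom _ f
  have hC : ∀ (a : A) (x : Coind f M), a • x = f a • x := fun _ _ => rfl
  have happ : ∀ (a : A) (x : Coind f M) (b : B), (a • x).1 b = x.1 (b * f a) := fun _ _ _ => rfl
  let i : M →ₗ[A] Coind f M :=
    { toFun := fun m => ⟨⟨⟨fun b => π b • m, by simp⟩, fun x y => by simp [add_smul]⟩,
        fun a b => by simp [h2, mul_smul]⟩
      map_add' := fun x y => Subtype.ext (AddMonoidHom.ext fun b => smul_add (π b) x y)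
      map_smul' := fun a x => Subtype.ext (AddMonoidHom.ext fun b => by
        rw [RingHom.id_apply, happ]
        change π b • a • x = π (b * f a) • x
        rw [h3, mul_smul]) }
  let r : Coind f M →ₗ[A] M :=
    { toFun := fun φ => φ.1 1
      map_add' := fun x y => rfl
      map_smul' := fun a x => by
        rw [happ, one_mul, RingHom.id_apply, ← x.2 a 1, mul_one] }
  refine pdLE_retract i r (fun x => ?_) (hpd_restr f hB n _ hC h)
  change π 1 • x = x
  rw [← map_one f, h1, one_smul]

end Helpers

/-- For a strictly separable ring extension `A ⊆ B`, the left global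
dimensions of `A` and `B` are equal. -/
theorem leftGlobalDim_eq_of_strictlySeparable {A B : Type u} [Ring A] [Ring B]
    (f : A →+* B) (hsep : StrictlySeparable f) :
    leftGlobalDim A = leftGlobalDim B := by
  apply le_antisymm
  · apply sSup_le
    rintro d ⟨M, _, _, rfl⟩
    refine le_trans ?_ (le_sSup ⟨Coind f M, inferInstance, inferInstance, rfl⟩)
    apply sInf_le_sInf
    rintro d ⟨n, rfl, h⟩
    exact ⟨n, rfl, pdLE_of_coind f hsep n M h⟩
  · apply sSup_le
    rintro d ⟨N, _, _, rfl⟩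
    letI : Module A N := Module.compHom N f
    refine le_trans ?_ (le_sSup ⟨N, inferInstance, inferInstance, rfl⟩)
    apply sInf_le_sInf
    rintro d ⟨n, rfl, h⟩
    exact ⟨n, rfl, pdLE_of_sep f hsep n N (fun _ _ => rfl) h⟩
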